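/- arXiv:0906.2437 — 3 statements merged into one kernel-verified Lean document; each statement's English description precedes it below -/
import Mathlib

section
/- Let k be a field of characteristic 0 and v ∈ ℕⁿ. The k-vector space R_v of SL₂(k)-invariants of multidegree v is spanned by the graph monomials m_Γ, where Γ ranges over the directed graphs on {1,…,n} whose valence vector equals v. -/
/-!
The proof is Gordan's and Capelli's, by Cayley's Ω-process.

Let `E_{ij} = ∑_a X(a,i) ∂_{(a,j)}` be the derivations giving the infinitesimal action of `gl₂`.
Since `k` is infinite, invariance of `f` under the two unipotent one-parameter subgroups
forces `E_{01} f = E_{10} f = 0` (`derivation_eq_zero_of_invariant`), and then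
`E_{00} f - E_{11} f = ⁅E_{01}, E_{10}⁆ f = 0`. If `f` is homogeneous of degree `m`, Euler's
identity yields `2 E_{11} f = m f`.

With `Ω_{ab} = ∂_{x_a} ∂_{y_b} - ∂_{x_b} ∂_{y_a}`, the Capelli identity (`capelli`) reads
`∑_{a,b} x_a y_b Ω_{ab} = E_{00} E_{11} - E_{10} E_{01} + E_{11}`. Antisymmetrizing the left side
and applying it to such an `f` gives `2 ∑_{a,b} [ab] Ω_{ab} f = m (m + 2) f`. The operators
`Ω_{ab}` preserve the conditions `E_{01} f = 0` and `E_{00} f = E_{11} f` and lower the degree by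
two, so by induction on `m` every such `f` is a combination of graph monomials
(`mem_span_of_infinitesimal`); dividing by `m (m + 2)` uses characteristic zero. Projecting to
multidegree `v` discards the graphs of other valence. Conversely, a bracket is multiplied by
`det g` under the substitution `g`, so graph monomials are invariant.
-/

open MvPolynomial

/-- The polynomial ring `A = k[x_1, y_1, …, x_n, y_n]`: variable `(i, 0)` is `x_i`
and `(i, 1)` is `y_i`. -/
abbrev PtRing (k : Type) [CommRing k] (n : ℕ) := MvPolynomial (Fin n × Fin 2) k

/-- The bracket `[ab] = x_a y_b − x_b y_a`. -/
noncomputable def bracket (k : Type) [CommRing k] (n : ℕ) (a b : Fin n) : PtRing k n :=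
  X (a, 0) * X (b, 1) - X (b, 0) * X (a, 1)

/-- The graph monomial `m_Γ = ∏_{(a,b) ∈ Γ} [ab]` of a directed graph `Γ`,
viewed as a multiset of directed edges. -/
noncomputable def graphMonomial (k : Type) [CommRing k] (n : ℕ)
    (Γ : Multiset (Fin n × Fin n)) : PtRing k n :=
  (Γ.map fun e => bracket k n e.1 e.2).prod

/-- The `k`-algebra endomorphism of `A` induced by a `2×2` matrix `g = ((p,q),(r,s))`:
`x_i ↦ p·x_i + r·y_i` and `y_i ↦ q·x_i + s·y_i`. -/
noncomputable def subst (k : Type) [CommRing k] (n : ℕ) (g : Matrix (Fin 2) (Fin 2) k) :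
    PtRing k n →ₐ[k] PtRing k n :=
  aeval fun p =>
    if p.2 = 0 then C (g 0 0) * X (p.1, 0) + C (g 1 0) * X (p.1, 1)
    else C (g 0 1) * X (p.1, 0) + C (g 1 1) * X (p.1, 1)

/-- The valence vector of a directed graph: the `i`-th entry is the number of edges
(with multiplicity) having `i` as an endpoint. -/
def valence (n : ℕ) (Γ : Multiset (Fin n × Fin n)) : Fin n → ℕ :=
  fun i => (Γ.map Prod.fst).count i + (Γ.map Prod.snd).count i

/-- `R_v`: the space of `SL₂(k)`-invariant multihomogeneous polynomials of multidegree `v`. -/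
noncomputable def Rv (k : Type) [CommRing k] (n : ℕ) (v : Fin n → ℕ) :
    Submodule k (PtRing k n) :=
  (⨅ g : Matrix.SpecialLinearGroup (Fin 2) k,
      LinearMap.ker ((subst k n (g : Matrix (Fin 2) (Fin 2) k)).toLinearMap
        - (LinearMap.id : PtRing k n →ₗ[k] PtRing k n))) ⊓
  weightedHomogeneousSubmodule k (fun p : Fin n × Fin 2 => Finsupp.single p.1 1)
    (Finsupp.equivFunOnFinite.symm v)

/-! ### The operators `E_{ij}` and `Ω_{ab}` -/

/-- The derivation `E_{ij} = ∑_a X(a,i) ∂_{(a,j)}`: the action of the matrix unit `(i, j)` of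
`gl₂` on the polynomial ring. -/
noncomputable def glDer (k : Type) [CommRing k] (n : ℕ) (i j : Fin 2) :
    Derivation k (PtRing k n) (PtRing k n) :=
  ∑ a : Fin n, (X (a, i) : PtRing k n) • pderiv (a, j)

/-- Cayley's operator `Ω_{ab} = ∂_{x_a} ∂_{y_b} - ∂_{x_b} ∂_{y_a}`. -/
noncomputable def cayleyOmega (k : Type) [CommRing k] (n : ℕ) (a b : Fin n)
    (f : PtRing k n) : PtRing k n :=
  pderiv (a, 0) (pderiv (b, 1) f) - pderiv (b, 0) (pderiv (a, 1) f)

section CommRing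

variable {k : Type} [CommRing k] {n : ℕ}

lemma glDer_apply (i j : Fin 2) (f : PtRing k n) :
    glDer k n i j f = ∑ a : Fin n, X (a, i) * pderiv (a, j) f := by
  have h := map_sum (Derivation.coeFnAddMonoidHom (R := k) (A := PtRing k n) (M := PtRing k n))
    (fun a : Fin n => (X (a, i) : PtRing k n) • pderiv (a, j)) Finset.univ
  rw [glDer]
  refine (congrFun h f).trans ?_
  rw [Finset.sum_apply]
  rfl

lemma glDer_X (i j : Fin 2) (b : Fin n) (l : Fin 2) :
    glDer k n i j (X (b, l)) = if l = j then X (b, i) else 0 := by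
  rw [glDer_apply]
  split_ifs with h
  · subst h
    rw [Finset.sum_eq_single b]
    · simp
    · intro a _ hab
      rw [pderiv_X_of_ne (by simpa using Ne.symm hab), mul_zero]
    · simp
  · refine Finset.sum_eq_zero fun a _ => ?_
    rw [pderiv_X_of_ne fun hp => h (Prod.ext_iff.1 hp).2, mul_zero]

lemma pderiv_comm (p q : Fin n × Fin 2) (f : PtRing k n) :
    pderiv p (pderiv q f) = pderiv q (pderiv p f) := by
  have h : ⁅(pderiv p : Derivation k (PtRing k n) (PtRing k n)),
      (pderiv q : Derivation k (PtRing k n) (PtRing k n))⁆ = 0 := by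
    ext r : 1
    rw [Derivation.commutator_apply]
    simp only [pderiv_X, Pi.single_apply]
    split_ifs <;> simp
  have := DFunLike.congr_fun h f
  simpa [Derivation.commutator_apply, sub_eq_zero] using this

/-- The commutator `[E_{ij}, ∂_{(a,l)}] = -δ_{il} ∂_{(a,j)}`. -/
lemma glDer_pderiv (i j l : Fin 2) (a : Fin n) (f : PtRing k n) :
    glDer k n i j (pderiv (a, l) f) =
      pderiv (a, l) (glDer k n i j f) - if l = i then pderiv (a, j) f else 0 := by
  simp only [glDer_apply, map_sum, pderiv_mul, Finset.sum_add_distrib]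
  have h : ∑ b : Fin n, pderiv (a, l) (X (b, i) : PtRing k n) * pderiv (b, j) f =
      if l = i then pderiv (a, j) f else 0 := by
    split_ifs with h
    · subst h
      rw [Finset.sum_eq_single a]
      · simp
      · intro b _ hb
        rw [pderiv_X_of_ne (by simpa using hb), zero_mul]
      · simp
    · refine Finset.sum_eq_zero fun b _ => ?_
      rw [pderiv_X_of_ne (by simp [Ne.symm h]), zero_mul]
  rw [h, add_sub_cancel_left]
  exact Finset.sum_congr rfl fun b _ => by rw [pderiv_comm]

lemma glDer_commutator (f : PtRing k n) :
    glDer k n 0 1 (glDer k n 1 0 f) - glDer k n 1 0 (glDer k n 0 1 f) =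
      glDer k n 0 0 f - glDer k n 1 1 f := by
  have h : ⁅glDer k n 0 1, glDer k n 1 0⁆ = glDer k n 0 0 - glDer k n 1 1 := by
    ext p : 1
    obtain ⟨b, l⟩ := p
    rw [Derivation.commutator_apply, Derivation.sub_apply]
    fin_cases l <;> simp [glDer_X]
  have := DFunLike.congr_fun h f
  simpa [Derivation.commutator_apply] using this

/-! ### The Capelli identity and the Ω-process -/

/-- The Capelli identity for `gl₂`. -/
lemma capelli (f : PtRing k n) :
    ∑ a : Fin n, ∑ b : Fin n, X (a, 0) * X (b, 1) * cayleyOmega k n a b f =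
      glDer k n 0 0 (glDer k n 1 1 f) - glDer k n 1 0 (glDer k n 0 1 f) + glDer k n 1 1 f := by
  have h1 : glDer k n 0 0 (glDer k n 1 1 f) =
      ∑ a : Fin n, ∑ b : Fin n, X (a, 0) * X (b, 1) * pderiv (a, 0) (pderiv (b, 1) f) := by
    rw [glDer_apply 1 1, map_sum, Finset.sum_comm]
    refine Finset.sum_congr rfl fun b _ => ?_
    rw [Derivation.leibniz, glDer_X, if_neg (by decide), smul_zero, add_zero, glDer_apply,
      smul_eq_mul, Finset.mul_sum]
    exact Finset.sum_congr rfl fun a _ => by ring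
  have h2 : glDer k n 1 0 (glDer k n 0 1 f) =
      ∑ a : Fin n, ∑ b : Fin n, X (a, 0) * X (b, 1) * pderiv (b, 0) (pderiv (a, 1) f) +
        glDer k n 1 1 f := by
    rw [glDer_apply 0 1, map_sum, glDer_apply 1 1, ← Finset.sum_add_distrib]
    refine Finset.sum_congr rfl fun a _ => ?_
    rw [Derivation.leibniz, glDer_X, if_pos rfl, glDer_apply, smul_eq_mul, smul_eq_mul,
      Finset.mul_sum, mul_comm (pderiv (a, 1) f)]
    congr 1
    exact Finset.sum_congr rfl fun b _ => by ring
  rw [h1, h2]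
  simp only [cayleyOmega, mul_sub, Finset.sum_sub_distrib]
  ring

lemma cayleyOmega_swap (a b : Fin n) (f : PtRing k n) :
    cayleyOmega k n b a f = -cayleyOmega k n a b f := by
  simp [cayleyOmega]

lemma sum_bracket_mul_cayleyOmega (f : PtRing k n) :
    ∑ a : Fin n, ∑ b : Fin n, bracket k n a b * cayleyOmega k n a b f =
      2 * ∑ a : Fin n, ∑ b : Fin n, X (a, 0) * X (b, 1) * cayleyOmega k n a b f := by
  have h : ∑ a : Fin n, ∑ b : Fin n, X (b, 0) * X (a, 1) * cayleyOmega k n a b f =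
      -∑ a : Fin n, ∑ b : Fin n, X (a, 0) * X (b, 1) * cayleyOmega k n a b f := by
    rw [Finset.sum_comm]
    simp only [← Finset.sum_neg_distrib]
    refine Finset.sum_congr rfl fun a _ => Finset.sum_congr rfl fun b _ => ?_
    rw [cayleyOmega_swap a b]
    ring
  simp only [bracket, sub_mul, Finset.sum_sub_distrib, h]
  ring

lemma glDer_zero_one_cayleyOmega (a b : Fin n) {f : PtRing k n} (h : glDer k n 0 1 f = 0) :
    glDer k n 0 1 (cayleyOmega k n a b f) = 0 := by
  simp [cayleyOmega, glDer_pderiv, h, pderiv_comm (b, 1) (a, 1)]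

lemma glDer_diag_cayleyOmega (a b : Fin n) {f : PtRing k n}
    (h : glDer k n 0 0 f = glDer k n 1 1 f) :
    glDer k n 0 0 (cayleyOmega k n a b f) = glDer k n 1 1 (cayleyOmega k n a b f) := by
  simp [cayleyOmega, glDer_pderiv, h]

lemma isHomogeneous_cayleyOmega (a b : Fin n) {f : PtRing k n} {m : ℕ} (h : f.IsHomogeneous m) :
    (cayleyOmega k n a b f).IsHomogeneous (m - 1 - 1) :=
  h.pderiv.pderiv.sub h.pderiv.pderiv

lemma glDer_euler {f : PtRing k n} {m : ℕ} (h : f.IsHomogeneous m) :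
    glDer k n 0 0 f + glDer k n 1 1 f = (m : PtRing k n) * f := by
  have := h.sum_X_mul_pderiv
  rw [Fintype.sum_prod_type] at this
  simpa [glDer_apply, Fin.sum_univ_two, Finset.sum_add_distrib] using this

/-! ### Graph monomials: span, invariance and multidegree -/

lemma bracket_self (a : Fin n) : bracket k n a a = 0 := by
  simp [bracket]

/-- The span of the graph monomials of all loopless graphs is stable under multiplication by
brackets. -/
lemma bracket_mul_mem_span (a b : Fin n) {f : PtRing k n}
    (hf : f ∈ Submodule.span k {f : PtRing k n | ∃ Γ : Multiset (Fin n × Fin n),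
      (∀ e ∈ Γ, e.1 ≠ e.2) ∧ f = graphMonomial k n Γ}) :
    bracket k n a b * f ∈ Submodule.span k {f : PtRing k n | ∃ Γ : Multiset (Fin n × Fin n),
      (∀ e ∈ Γ, e.1 ≠ e.2) ∧ f = graphMonomial k n Γ} := by
  rcases eq_or_ne a b with rfl | hab
  · simp [bracket_self]
  induction hf using Submodule.span_induction with
  | mem g hg =>
    obtain ⟨Γ, hΓ, rfl⟩ := hg
    refine Submodule.subset_span ⟨(a, b) ::ₘ Γ, ?_, by simp [graphMonomial]⟩
    intro e he
    rcases Multiset.mem_cons.1 he with rfl | he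
    exacts [hab, hΓ e he]
  | zero => simp
  | add g h _ _ hg hh => rw [mul_add]; exact Submodule.add_mem _ hg hh
  | smul c g _ hg => rw [mul_smul_comm]; exact Submodule.smul_mem _ c hg

lemma subst_bracket (g : Matrix (Fin 2) (Fin 2) k) (a b : Fin n) :
    subst k n g (bracket k n a b) = C g.det * bracket k n a b := by
  simp only [subst, bracket, map_sub, map_mul, aeval_X, Matrix.det_fin_two]
  simp
  ring

lemma subst_graphMonomial (g : Matrix.SpecialLinearGroup (Fin 2) k)
    (Γ : Multiset (Fin n × Fin n)) :
    subst k n (g : Matrix (Fin 2) (Fin 2) k) (graphMonomial k n Γ) = graphMonomial k n Γ := by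
  rw [graphMonomial, map_multiset_prod, Multiset.map_map]
  refine congrArg Multiset.prod (Multiset.map_congr rfl fun e _ => ?_)
  simp [subst_bracket]

lemma isWeightedHomogeneous_graphMonomial (Γ : Multiset (Fin n × Fin n)) :
    IsWeightedHomogeneous (fun p : Fin n × Fin 2 => Finsupp.single p.1 1)
      (graphMonomial k n Γ) (Finsupp.equivFunOnFinite.symm (valence n Γ)) := by
  induction Γ using Multiset.induction_on with
  | empty =>
    have h : Finsupp.equivFunOnFinite.symm (valence n 0) = 0 := by
      ext i; simp [valence]
    rw [h]
    simpa [graphMonomial] using isWeightedHomogeneous_one k _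
  | cons e Γ ih =>
    have h : Finsupp.equivFunOnFinite.symm (valence n (e ::ₘ Γ)) =
        (Finsupp.single e.1 1 + Finsupp.single e.2 1) +
          Finsupp.equivFunOnFinite.symm (valence n Γ) := by
      ext i
      simp [valence, Multiset.count_cons, Finsupp.single_apply, eq_comm (a := i)]
      ring
    rw [h]
    have hb : IsWeightedHomogeneous (fun p : Fin n × Fin 2 => Finsupp.single p.1 1)
        (bracket k n e.1 e.2) (Finsupp.single e.1 1 + Finsupp.single e.2 1) := by
      refine ((isWeightedHomogeneous_X k _ (e.1, 0)).mul
        (isWeightedHomogeneous_X k _ (e.2, 1))).sub ?_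
      rw [add_comm]
      exact (isWeightedHomogeneous_X k _ (e.2, 0)).mul (isWeightedHomogeneous_X k _ (e.1, 1))
    simpa [graphMonomial] using hb.mul ih

/-- Multihomogeneous polynomials of multidegree `v` are homogeneous of degree `∑ v_i`. -/
lemma isHomogeneous_of_multihomogeneous {f : PtRing k n} {v : Fin n →₀ ℕ}
    (hf : IsWeightedHomogeneous (fun p : Fin n × Fin 2 => Finsupp.single p.1 1) f v) :
    f.IsHomogeneous v.degree := by
  intro d hd
  have h : Finsupp.weight (R := ℕ) (1 : Fin n × Fin 2 → ℕ) = Finsupp.degree.comp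
      (Finsupp.weight (R := ℕ) fun p : Fin n × Fin 2 => (Finsupp.single p.1 1 : Fin n →₀ ℕ)) := by
    ext p
    simp [Finsupp.weight_apply]
  rw [← hf hd, h]
  rfl

end CommRing

/-! ### From invariance to graph monomials -/

section Field

variable {k : Type} [Field k] [CharZero k] {n : ℕ}

/-- A polynomial fixed by the substitutions `X p ↦ X p + t c_p` for all `t ∈ k` is killed by the
derivation `X p ↦ c_p`: expand in powers of `t` and compare the linear coefficients. -/
lemma derivation_eq_zero_of_invariant (D : Derivation k (PtRing k n) (PtRing k n))
    (f : PtRing k n)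
    (hf : ∀ t : k, aeval (fun p => X p + C t * D (X p)) f = f) : D f = 0 := by
  let φ : PtRing k n →ₐ[k] Polynomial (PtRing k n) :=
    aeval fun p => Polynomial.C (X p) + Polynomial.X * Polynomial.C (D (X p))
  have heval (t : k) (g : PtRing k n) :
      (φ g).eval (C t) = aeval (fun p => X p + C t * D (X p)) g := by
    induction g using MvPolynomial.induction_on with
    | C a => simp [φ, Polynomial.algebraMap_apply]
    | add g h hg hh => simp [hg, hh]
    | mul_X g p hg =>
      have hp : (φ (X p)).eval (C t) = X p + C t * D (X p) := by
        simp [φ]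
        ring
      rw [map_mul, Polynomial.eval_mul, hg, hp, map_mul, aeval_X]
  have hzero (g : PtRing k n) : (φ g).eval 0 = g := by
    have h := heval 0 g
    simp only [map_zero, zero_mul, add_zero] at h
    rw [h, aeval_X_left_apply]
  have hder (g : PtRing k n) : (Polynomial.derivative (φ g)).eval 0 = D g := by
    induction g using MvPolynomial.induction_on with
    | C a => simp [φ, Polynomial.algebraMap_apply]
    | add g h hg hh => simp [hg, hh]
    | mul_X g p hg =>
      have hp : φ (X p) = Polynomial.C (X p) + Polynomial.X * Polynomial.C (D (X p)) := by
        simp [φ]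
      rw [map_mul, Polynomial.derivative_mul, Polynomial.eval_add, Polynomial.eval_mul,
        Polynomial.eval_mul, hg, hzero, hzero, hp, Derivation.leibniz]
      simp
      ring
  have hconst : φ f = Polynomial.C f := by
    refine Polynomial.eq_of_infinite_eval_eq _ _ ?_
    refine (Set.infinite_range_of_injective (C_injective (Fin n × Fin 2) k)).mono ?_
    rintro _ ⟨t, rfl⟩
    rw [Set.mem_ofPred_eq, heval, hf, Polynomial.eval_C]
  rw [← hder, hconst]
  simp

/-- Infinitesimal form of the theorem: a highest weight vector of weight zero is a combination of
graph monomials. -/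
lemma mem_span_of_infinitesimal (m : ℕ) : ∀ f : PtRing k n, f.IsHomogeneous m →
    glDer k n 0 1 f = 0 → glDer k n 0 0 f = glDer k n 1 1 f →
    f ∈ Submodule.span k {f : PtRing k n | ∃ Γ : Multiset (Fin n × Fin n),
      (∀ e ∈ Γ, e.1 ≠ e.2) ∧ f = graphMonomial k n Γ} := by
  induction m using Nat.strong_induction_on with
  | _ m ih =>
  intro f hm hE hH
  rcases Nat.eq_zero_or_pos m with rfl | hpos
  · rw [← totalDegree_zero_iff_isHomogeneous, totalDegree_eq_zero_iff_eq_C] at hm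
    rw [hm, C_eq_smul_one]
    exact Submodule.smul_mem _ _ (Submodule.subset_span ⟨0, by simp, by simp [graphMonomial]⟩)
  have hmem : ∑ a : Fin n, ∑ b : Fin n, bracket k n a b * cayleyOmega k n a b f ∈
      Submodule.span k {f : PtRing k n | ∃ Γ : Multiset (Fin n × Fin n),
        (∀ e ∈ Γ, e.1 ≠ e.2) ∧ f = graphMonomial k n Γ} :=
    Submodule.sum_mem _ fun a _ => Submodule.sum_mem _ fun b _ =>
      bracket_mul_mem_span a b (ih (m - 1 - 1) (by omega) _ (isHomogeneous_cayleyOmega a b hm)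
        (glDer_zero_one_cayleyOmega a b hE) (glDer_diag_cayleyOmega a b hH))
  have hE11 : 2 * glDer k n 1 1 f = (m : PtRing k n) * f := by
    rw [← glDer_euler hm, hH, two_mul]
  have hE00 : 2 * glDer k n 0 0 (glDer k n 1 1 f) = (m : PtRing k n) * glDer k n 1 1 f := by
    have := congrArg (glDer k n 0 0) hE11
    simpa [two_mul, ← nsmul_eq_mul, hH] using this
  have hkey : ((m : k) * (m + 2)) • f =
      (2 : k) • ∑ a : Fin n, ∑ b : Fin n, bracket k n a b * cayleyOmega k n a b f := by
    rw [sum_bracket_mul_cayleyOmega, capelli, hE, map_zero, sub_zero, smul_eq_C_mul,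
      smul_eq_C_mul]
    simp only [map_mul, map_add, map_natCast, map_ofNat]
    linear_combination (-(m : PtRing k n) - 2) * hE11 - 2 * hE00
  have hne : (m : k) * (m + 2) ≠ 0 := by
    have : (m : k) ≠ 0 := by exact_mod_cast hpos.ne'
    have : (m : k) + 2 ≠ 0 := by exact_mod_cast (by omega : m + 2 ≠ 0)
    positivity
  rw [← Submodule.smul_mem_iff _ hne, hkey]
  exact Submodule.smul_mem _ _ hmem

/-- Invariance under the unipotent subgroups makes `f` infinitesimally invariant. -/
lemma glDer_eq_zero_of_invariant {f : PtRing k n}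
    (hf : ∀ g : Matrix.SpecialLinearGroup (Fin 2) k,
      subst k n (g : Matrix (Fin 2) (Fin 2) k) f = f) :
    glDer k n 0 1 f = 0 ∧ glDer k n 1 0 f = 0 := by
  constructor
  · refine derivation_eq_zero_of_invariant _ f fun t => ?_
    have h := hf ⟨!![1, t; 0, 1], by simp [Matrix.det_fin_two]⟩
    rw [subst] at h
    convert h using 2
    refine congrArg aeval (funext fun ⟨a, l⟩ => ?_)
    fin_cases l <;> simp [glDer_X, add_comm]
  · refine derivation_eq_zero_of_invariant _ f fun t => ?_
    have h := hf ⟨!![1, 0; t, 1], by simp [Matrix.det_fin_two]⟩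
    rw [subst] at h
    convert h using 2
    refine congrArg aeval (funext fun ⟨a, l⟩ => ?_)
    fin_cases l <;> simp [glDer_X]

end Field

/-- In characteristic zero, `R_v` is spanned by the graph monomials `m_Γ` for directed graphs
`Γ` with valence vector `v`. -/
theorem stmt3 (k : Type) [Field k] [CharZero k] (n : ℕ) (v : Fin n → ℕ) :
    Rv k n v = Submodule.span k
      {f : PtRing k n | ∃ Γ : Multiset (Fin n × Fin n),
        (∀ e ∈ Γ, e.1 ≠ e.2) ∧ valence n Γ = v ∧ f = graphMonomial k n Γ} := by
  apply le_antisymm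
  · intro f hf
    obtain ⟨hinv, hdeg⟩ := Submodule.mem_inf.1 hf
    have hinv' (g : Matrix.SpecialLinearGroup (Fin 2) k) :
        subst k n (g : Matrix (Fin 2) (Fin 2) k) f = f := by
      have := (Submodule.mem_iInf _).1 hinv g
      simpa [sub_eq_zero] using this
    rw [mem_weightedHomogeneousSubmodule] at hdeg
    obtain ⟨h01, h10⟩ := glDer_eq_zero_of_invariant hinv'
    have hH : glDer k n 0 0 f = glDer k n 1 1 f := by
      rw [← sub_eq_zero, ← glDer_commutator, h01, h10, map_zero, map_zero, sub_zero]
    have hspan := mem_span_of_infinitesimal _ f (isHomogeneous_of_multihomogeneous hdeg) h01 hH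
    -- Only the component of multidegree `v` of the resulting combination contributes to `f`.
    rw [← hdeg.weightedHomogeneousComponent_same]
    rw [← Submodule.mem_comap]
    refine Submodule.span_le.2 ?_ hspan
    rintro _ ⟨Γ, hΓ, rfl⟩
    rw [SetLike.mem_coe, Submodule.mem_comap]
    have hhom := isWeightedHomogeneous_graphMonomial (k := k) Γ
    by_cases hv : valence n Γ = v
    · rw [← hv, hhom.weightedHomogeneousComponent_same]
      exact Submodule.subset_span ⟨Γ, hΓ, rfl, rfl⟩
    · rw [hhom.weightedHomogeneousComponent_ne]
      · exact Submodule.zero_mem _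
      · exact fun h => hv (Finsupp.equivFunOnFinite.symm.injective h).symm
  · rw [Submodule.span_le]
    rintro _ ⟨Γ, _, rfl, rfl⟩
    refine Submodule.mem_inf.2 ⟨(Submodule.mem_iInf _).2 fun g => ?_, ?_⟩
    · simp [subst_graphMonomial]
    · exact isWeightedHomogeneous_graphMonomial Γ
end

section
/- (Linear relations among graph monomials.) Let k be a field of characteristic 0 and v ∈ ℕⁿ. Let V be the free k-vector space with basis vectors e_Γ indexed by the directed graphs Γ on {1,…,n} with valence vector v, and let Φ : V → A be the k-linear map with Φ(e_Γ) = m_Γ. Then the kernel of Φ is spanned by the following elements: (i) sign relations e_Γ + e_{Γ'}, where Γ' is obtained from Γ by reversing the direction of a single edge; and (ii) Plücker relations e_{Γ₀+(a,b)+(c,d)} − e_{Γ₀+(a,c)+(b,d)} + e_{Γ₀+(a,d)+(b,c)}, where Γ₀ is a directed graph on {1,…,n}, a, b, c, d are four distinct vertices, Γ₀+(a,b)+(c,d) denotes the multiset union of Γ₀ with the two indicated directed edges, and the three resulting graphs have valence vector v. -/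
/-!
The argument is the straightening algorithm for brackets together with an initial-term argument.

Call a directed graph *standard* if every edge `(a, b)` has `a < b` and no two edges are nested,
i.e. there are no edges `(a, b)`, `(c, d)` with `a < c` and `d < b`.

* Modulo the sign and Plücker relations, every `e_Γ` is a combination of standard ones
  (`straighten`). A badly oriented edge is reversed; a nested pair `a < c < d < b` is replaced by
  `(a, d), (c, b)` and `(a, c), (d, b)`. Both moves lower the sum of the squared lengths of the
  edges, once each badly oriented edge is penalised by `1`.
* The monomials of standard graphs are linearly independent. Give `y_i` weight `i` and `x_i`
  weight `0`: for `a < b` the term `x_a y_b` of `[ab]` is the heavier one, so `m_Γ` has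
  the single heaviest monomial `∏ x_a y_b` (`coeff_graphMonomial`). This monomial records the
  multisets of tails and of heads of `Γ`, and a standard graph is a chain for the product order,
  hence determined by these two multisets (`chain_ext`).

An element of the kernel is thus a combination of relations plus a combination of standard graphs
which is again in the kernel, and so vanishes.
-/

open MvPolynomial

/-- The type of directed graphs on `{1,…,n}` with valence vector `v`. -/
def GraphOf (n : ℕ) (v : Fin n → ℕ) : Type :=
  {Γ : Multiset (Fin n × Fin n) // (∀ e ∈ Γ, e.1 ≠ e.2) ∧ valence n Γ = v}

/-! ### Independence of standard monomials -/

/-- Exponent of the heaviest monomial `∏ x_a y_b` of `m_Γ`, when all edges have `a < b`. -/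
noncomputable def inExp (n : ℕ) (Γ : Multiset (Fin n × Fin n)) : Fin n × Fin 2 →₀ ℕ :=
  (Γ.map fun e => Finsupp.single (e.1, (0 : Fin 2)) 1 + Finsupp.single (e.2, (1 : Fin 2)) 1).sum

/-- The weight of an exponent, where `x_i` has weight `0` and `y_i` has weight `i`. -/
def wt (n : ℕ) (d : Fin n × Fin 2 →₀ ℕ) : ℕ := ∑ i : Fin n, d (i, 1) * (i : ℕ)

lemma wt_add (n : ℕ) (d e : Fin n × Fin 2 →₀ ℕ) : wt n (d + e) = wt n d + wt n e := by
  simp [wt, add_mul, Finset.sum_add_distrib]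

lemma wt_edge (n : ℕ) (a b : Fin n) :
    wt n (Finsupp.single (a, (0 : Fin 2)) 1 + Finsupp.single (b, (1 : Fin 2)) 1) = b := by
  simp [wt, Finsupp.single_apply]

lemma inExp_cons (n : ℕ) (e : Fin n × Fin n) (Γ : Multiset (Fin n × Fin n)) :
    inExp n (e ::ₘ Γ) =
      (Finsupp.single (e.1, (0 : Fin 2)) 1 + Finsupp.single (e.2, (1 : Fin 2)) 1) + inExp n Γ := by
  simp [inExp]

lemma bracket_eq (k : Type) [CommRing k] (n : ℕ) (a b : Fin n) :
    bracket k n a b =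
      monomial (Finsupp.single (a, (0 : Fin 2)) 1 + Finsupp.single (b, (1 : Fin 2)) 1) 1
      - monomial (Finsupp.single (b, (0 : Fin 2)) 1 + Finsupp.single (a, (1 : Fin 2)) 1) 1 := by
  simp [bracket, X, monomial_mul]

lemma graphMonomial_cons (k : Type) [CommRing k] (n : ℕ) (e : Fin n × Fin n)
    (Γ : Multiset (Fin n × Fin n)) :
    graphMonomial k n (e ::ₘ Γ) = bracket k n e.1 e.2 * graphMonomial k n Γ := by
  simp [graphMonomial]

/-- Among monomials at least as heavy as the initial one, only the initial monomial occurs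
in `m_Γ`, with coefficient `1`. -/
lemma coeff_graphMonomial (k : Type) [CommRing k] (n : ℕ) (Γ : Multiset (Fin n × Fin n))
    (hΓ : ∀ e ∈ Γ, e.1 < e.2) (d : Fin n × Fin 2 →₀ ℕ) (hd : wt n (inExp n Γ) ≤ wt n d) :
    coeff d (graphMonomial k n Γ) = if d = inExp n Γ then 1 else 0 := by
  induction Γ using Multiset.induction_on generalizing d with
  | empty =>
    simp only [graphMonomial, inExp, Multiset.map_zero, Multiset.prod_zero, Multiset.sum_zero,
      coeff_one, eq_comm (a := d)]
  | cons e Γ ih =>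
    have ih' := ih (fun e he => hΓ e (Multiset.mem_cons_of_mem he))
    have he : e.1 < e.2 := hΓ e (Multiset.mem_cons_self _ _)
    have hlt : (e.1 : ℕ) < e.2 := he
    rw [inExp_cons, wt_add, wt_edge] at hd
    rw [graphMonomial_cons, bracket_eq, sub_mul, coeff_sub, coeff_monomial_mul',
      coeff_monomial_mul', inExp_cons]
    -- The lighter term `x_b y_a` of the bracket does not contribute.
    have h2 : (if (Finsupp.single (e.2, (0 : Fin 2)) 1 + Finsupp.single (e.1, (1 : Fin 2)) 1) ≤ d
        then (1 : k) * coeff (d - (Finsupp.single (e.2, (0 : Fin 2)) 1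
          + Finsupp.single (e.1, (1 : Fin 2)) 1)) (graphMonomial k n Γ) else 0) = 0 := by
      split_ifs with h
      · obtain ⟨d', rfl⟩ := exists_add_of_le h
        rw [wt_add, wt_edge] at hd
        rw [add_tsub_cancel_left, ih' _ (by omega), if_neg, mul_zero]
        rintro rfl
        omega
      · rfl
    rw [h2, sub_zero]
    split_ifs with h h' h'
    · subst h'
      rw [add_tsub_cancel_left, ih' _ le_rfl, if_pos rfl, mul_one]
    · obtain ⟨d', rfl⟩ := exists_add_of_le h
      rw [wt_add, wt_edge] at hd
      rw [add_tsub_cancel_left, ih' _ (by omega), if_neg, mul_zero]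
      rintro rfl
      exact h' rfl
    · subst h'
      exact absurd le_self_add h
    · rfl

lemma inExp_fst (n : ℕ) (Γ : Multiset (Fin n × Fin n)) (i : Fin n) :
    inExp n Γ (i, 0) = (Γ.map Prod.fst).count i := by
  induction Γ using Multiset.induction_on with
  | empty => simp [inExp]
  | cons e Γ ih =>
    rw [inExp_cons, Finsupp.add_apply, ih, Multiset.map_cons, Multiset.count_cons]
    simp [Finsupp.single_apply, add_comm, eq_comm]

lemma inExp_snd (n : ℕ) (Γ : Multiset (Fin n × Fin n)) (i : Fin n) :
    inExp n Γ (i, 1) = (Γ.map Prod.snd).count i := by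
  induction Γ using Multiset.induction_on with
  | empty => simp [inExp]
  | cons e Γ ih =>
    rw [inExp_cons, Finsupp.add_apply, ih, Multiset.map_cons, Multiset.count_cons]
    simp [Finsupp.single_apply, add_comm, eq_comm]

/-- No two edges are nested; equivalently, the edges form a chain in the product order. -/
def NonNested {n : ℕ} (Γ : Multiset (Fin n × Fin n)) : Prop :=
  ∀ e ∈ Γ, ∀ f ∈ Γ, ¬ (e.1 < f.1 ∧ f.2 < e.2)

lemma NonNested.exists_min {n : ℕ} {Γ : Multiset (Fin n × Fin n)} (h : NonNested Γ)
    (h0 : Γ ≠ 0) : ∃ e ∈ Γ, ∀ f ∈ Γ, e.1 ≤ f.1 ∧ e.2 ≤ f.2 := by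
  have hne : Γ.toFinset.Nonempty := by simpa using h0
  obtain ⟨e, he, hmin⟩ := Γ.toFinset.exists_min_image (fun e => toLex e) hne
  rw [Multiset.mem_toFinset] at he
  refine ⟨e, he, fun f hf => ?_⟩
  have h1 := hmin f (by simpa using hf)
  rw [Prod.Lex.le_iff] at h1
  have h2 := h e he f hf
  rcases h1 with h1 | ⟨h1, h3⟩
  · exact ⟨h1.le, not_lt.1 fun h4 => h2 ⟨h1, h4⟩⟩
  · exact ⟨h1.le, h3⟩

/-- A non-nested graph is determined by its multisets of tails and heads: its least edge joins
the least tail to the least head, and can be removed. -/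
lemma chain_ext {n : ℕ} (Γ Δ : Multiset (Fin n × Fin n)) (hΓ : NonNested Γ) (hΔ : NonNested Δ)
    (h1 : Γ.map Prod.fst = Δ.map Prod.fst) (h2 : Γ.map Prod.snd = Δ.map Prod.snd) : Γ = Δ := by
  induction hm : Γ.card generalizing Γ Δ with
  | zero =>
    obtain rfl := Multiset.card_eq_zero.1 hm
    simpa [eq_comm] using h1
  | succ m ih =>
    have hc : Γ.card = Δ.card := by simpa using congrArg Multiset.card h1
    obtain ⟨e, he, hemin⟩ := hΓ.exists_min (by rintro rfl; simp at hm)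
    obtain ⟨f, hf, hfmin⟩ := hΔ.exists_min (by rintro rfl; simp at hc; simp [hc] at hm)
    have mem1 : ∀ i, (∃ x ∈ Γ, x.1 = i) ↔ ∃ x ∈ Δ, x.1 = i := fun i => by
      simpa only [Multiset.mem_map] using iff_of_eq (congrArg (i ∈ ·) h1)
    have mem2 : ∀ i, (∃ x ∈ Γ, x.2 = i) ↔ ∃ x ∈ Δ, x.2 = i := fun i => by
      simpa only [Multiset.mem_map] using iff_of_eq (congrArg (i ∈ ·) h2)
    have hef : e = f := by
      obtain ⟨x1, hx1, e1⟩ := (mem1 e.1).1 ⟨e, he, rfl⟩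
      obtain ⟨x2, hx2, e2⟩ := (mem2 e.2).1 ⟨e, he, rfl⟩
      obtain ⟨y1, hy1, f1⟩ := (mem1 f.1).2 ⟨f, hf, rfl⟩
      obtain ⟨y2, hy2, f2⟩ := (mem2 f.2).2 ⟨f, hf, rfl⟩
      refine Prod.ext (le_antisymm ?_ ?_) (le_antisymm ?_ ?_)
      · exact f1 ▸ (hemin _ hy1).1
      · exact e1 ▸ (hfmin _ hx1).1
      · exact f2 ▸ (hemin _ hy2).2
      · exact e2 ▸ (hfmin _ hx2).2
    subst hef
    obtain ⟨Γ', rfl⟩ := Multiset.exists_cons_of_mem he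
    obtain ⟨Δ', rfl⟩ := Multiset.exists_cons_of_mem hf
    congr 1
    refine ih Γ' Δ' (fun a ha b hb => hΓ a (Multiset.mem_cons_of_mem ha) b
        (Multiset.mem_cons_of_mem hb)) (fun a ha b hb => hΔ a (Multiset.mem_cons_of_mem ha) b
        (Multiset.mem_cons_of_mem hb)) ?_ ?_ ?_
    · simpa using h1
    · simpa using h2
    · simpa using hm

/-- Standard graphs: every edge goes from a smaller to a larger vertex, and no two edges are
nested. -/
def IsStd {n : ℕ} (Γ : Multiset (Fin n × Fin n)) : Prop :=
  (∀ e ∈ Γ, e.1 < e.2) ∧ NonNested Γ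

lemma IsStd.eq_of_inExp {n : ℕ} {Γ Δ : Multiset (Fin n × Fin n)} (hΓ : IsStd Γ) (hΔ : IsStd Δ)
    (h : inExp n Γ = inExp n Δ) : Γ = Δ := by
  apply chain_ext Γ Δ hΓ.2 hΔ.2
  · ext i
    rw [← inExp_fst, ← inExp_fst, h]
  · ext i
    rw [← inExp_snd, ← inExp_snd, h]

/-- Independence of standard monomials, read off at the initial monomial of a graph of maximal
weight in the support. -/
lemma std_independent (k : Type) [Field k] (n : ℕ) (v : Fin n → ℕ) (t : GraphOf n v →₀ k)
    (ht : ∀ Γ ∈ t.support, IsStd Γ.1)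
    (h0 : Finsupp.linearCombination k (fun Γ : GraphOf n v => graphMonomial k n Γ.1) t = 0) :
    t = 0 := by
  by_contra hne
  obtain ⟨Γ, hΓ, hmax⟩ := t.support.exists_max_image (fun Γ => wt n (inExp n Γ.1))
    (Finsupp.support_nonempty_iff.2 hne)
  have h1 := congrArg (coeff (inExp n Γ.1)) h0
  rw [Finsupp.linearCombination_apply, Finsupp.sum, coeff_sum, coeff_zero,
    Finset.sum_eq_single_of_mem Γ hΓ] at h1
  · rw [coeff_smul, coeff_graphMonomial k n _ (ht Γ hΓ).1 _ le_rfl, if_pos rfl] at h1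
    exact Finsupp.mem_support_iff.1 hΓ (by simpa using h1)
  · intro Δ hΔ hne'
    rw [coeff_smul, coeff_graphMonomial k n _ (ht Δ hΔ).1 _ (hmax Δ hΔ), if_neg, smul_zero]
    intro h
    exact hne' (Subtype.ext ((ht Γ hΓ).eq_of_inExp (ht Δ hΔ) h).symm)

/-! ### Straightening -/

/-- The squared length of an edge, plus `1` if the edge is badly oriented. -/
def edgeCost {n : ℕ} (e : Fin n × Fin n) : ℕ :=
  if e.1 < e.2 then ((e.2 : ℕ) - e.1) ^ 2 else ((e.1 : ℕ) - e.2) ^ 2 + 1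

/-- The quantity that decreases during straightening. -/
def cost {n : ℕ} (Γ : Multiset (Fin n × Fin n)) : ℕ := (Γ.map edgeCost).sum

lemma cost_cons {n : ℕ} (e : Fin n × Fin n) (Γ : Multiset (Fin n × Fin n)) :
    cost (e ::ₘ Γ) = edgeCost e + cost Γ := by simp [cost]

lemma edgeCost_flip {n : ℕ} {a b : Fin n} (h : b < a) :
    edgeCost (b, a) < edgeCost (a, b) := by
  simp [edgeCost, h, h.not_gt]

lemma edgeCost_plucker {n : ℕ} {a b c d : Fin n} (h1 : a < c) (h2 : c < d) (h3 : d < b) :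
    edgeCost (a, c) + edgeCost (d, b) < edgeCost (a, b) + edgeCost (c, d) ∧
    edgeCost (a, d) + edgeCost (c, b) < edgeCost (a, b) + edgeCost (c, d) := by
  simp only [edgeCost, h1, h2, h3, h1.trans h2, h2.trans h3, (h1.trans h2).trans h3, if_true]
  obtain ⟨p, hp⟩ := Nat.exists_eq_add_of_lt (Fin.lt_def.1 h1)
  obtain ⟨q, hq⟩ := Nat.exists_eq_add_of_lt (Fin.lt_def.1 h2)
  obtain ⟨r, hr⟩ := Nat.exists_eq_add_of_lt (Fin.lt_def.1 h3)
  rw [show (c : ℕ) - a = p + 1 by omega, show (b : ℕ) - d = r + 1 by omega,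
    show (b : ℕ) - a = (p + 1) + (q + 1) + (r + 1) by omega, show (d : ℕ) - c = q + 1 by omega,
    show (d : ℕ) - a = (p + 1) + (q + 1) by omega, show (b : ℕ) - c = (q + 1) + (r + 1) by omega]
  constructor <;> nlinarith [Nat.zero_le (p * q), Nat.zero_le (q * r), Nat.zero_le (p * r)]

lemma valence_cons (n : ℕ) (a b : Fin n) (Γ : Multiset (Fin n × Fin n)) :
    valence n ((a, b) ::ₘ Γ) = Pi.single a 1 + Pi.single b 1 + valence n Γ := by
  ext i
  simp only [valence, Multiset.map_cons, Multiset.count_cons, Pi.add_apply, Pi.single_apply]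
  omega

/-- The sign relations. -/
def signRel (k : Type) [Field k] (n : ℕ) (v : Fin n → ℕ) : Set (GraphOf n v →₀ k) :=
  {w : GraphOf n v →₀ k | ∃ (Γ Γ' : GraphOf n v) (Γ₀ : Multiset (Fin n × Fin n))
          (a b : Fin n),
          Γ.1 = (a, b) ::ₘ Γ₀ ∧ Γ'.1 = (b, a) ::ₘ Γ₀ ∧
          w = Finsupp.single Γ 1 + Finsupp.single Γ' 1}

/-- The Plücker relations. -/
def pluckerRel (k : Type) [Field k] (n : ℕ) (v : Fin n → ℕ) : Set (GraphOf n v →₀ k) :=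
  {w : GraphOf n v →₀ k | ∃ (Γ₁ Γ₂ Γ₃ : GraphOf n v) (Γ₀ : Multiset (Fin n × Fin n))
          (a b c d : Fin n),
          a ≠ b ∧ a ≠ c ∧ a ≠ d ∧ b ≠ c ∧ b ≠ d ∧ c ≠ d ∧
          Γ₁.1 = (a, b) ::ₘ (c, d) ::ₘ Γ₀ ∧
          Γ₂.1 = (a, c) ::ₘ (b, d) ::ₘ Γ₀ ∧
          Γ₃.1 = (a, d) ::ₘ (b, c) ::ₘ Γ₀ ∧
          w = Finsupp.single Γ₁ 1 - Finsupp.single Γ₂ 1 + Finsupp.single Γ₃ 1}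

lemma straighten (k : Type) [Field k] (n : ℕ) (v : Fin n → ℕ) (Γ : GraphOf n v) :
    (Finsupp.single Γ 1 : GraphOf n v →₀ k) ∈
      Submodule.span k (signRel k n v ∪ pluckerRel k n v) ⊔
        Finsupp.supported k k {Δ : GraphOf n v | IsStd Δ.1} := by
  induction hm : cost Γ.1 using Nat.strong_induction_on generalizing Γ with
  | _ m ih =>
  subst hm
  by_cases hor : ∀ e ∈ Γ.1, e.1 < e.2
  · by_cases hnn : NonNested Γ.1
    · exact Submodule.mem_sup_right (Finsupp.single_mem_supported k 1 ⟨hor, hnn⟩)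
    · simp only [NonNested, not_forall, not_not] at hnn
      obtain ⟨⟨a, b⟩, he, ⟨c, d⟩, hf, h1, h3⟩ := hnn
      have h2 : c < d := hor _ hf
      dsimp only at h1 h3
      obtain ⟨Γ₁, hΓ₁⟩ := Multiset.exists_cons_of_mem he
      have hf' : (c, d) ∈ Γ₁ := by
        rw [hΓ₁, Multiset.mem_cons] at hf
        rcases hf with hf | hf
        · exact absurd (congrArg Prod.fst hf) h1.ne'
        · exact hf
      obtain ⟨Γ₀, rfl⟩ := Multiset.exists_cons_of_mem hf'
      have hΓ0 : ∀ e ∈ Γ₀, e.1 ≠ e.2 := fun e he => Γ.2.1 e (by rw [hΓ₁]; simp [he])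
      have hval := Γ.2.2
      rw [hΓ₁, valence_cons, valence_cons] at hval
      let Γ₂ : GraphOf n v := ⟨(a, c) ::ₘ (d, b) ::ₘ Γ₀, by
        simp only [Multiset.mem_cons, forall_eq_or_imp]
        exact ⟨h1.ne, h3.ne, hΓ0⟩, by
        rw [valence_cons, valence_cons, ← hval]; abel⟩
      let Γ₃ : GraphOf n v := ⟨(a, d) ::ₘ (c, b) ::ₘ Γ₀, by
        simp only [Multiset.mem_cons, forall_eq_or_imp]
        exact ⟨(h1.trans h2).ne, (h2.trans h3).ne, hΓ0⟩, by
        rw [valence_cons, valence_cons, ← hval]; abel⟩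
      have hcost := edgeCost_plucker h1 h2 h3
      have i2 := ih (cost Γ₂.1) (by
        simp only [Γ₂, hΓ₁, cost_cons]; omega) Γ₂ rfl
      have i3 := ih (cost Γ₃.1) (by
        simp only [Γ₃, hΓ₁, cost_cons]; omega) Γ₃ rfl
      have hrel : (Finsupp.single Γ₂ 1 - Finsupp.single Γ₃ 1 + Finsupp.single Γ 1 :
          GraphOf n v →₀ k) ∈ Submodule.span k (signRel k n v ∪ pluckerRel k n v) :=
        Submodule.subset_span (Or.inr ⟨Γ₂, Γ₃, Γ, Γ₀, a, c, d, b, h1.ne, (h1.trans h2).ne,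
          ((h1.trans h2).trans h3).ne, h2.ne, (h2.trans h3).ne, h3.ne, rfl, rfl, hΓ₁, rfl⟩)
      have := Submodule.add_mem _ (Submodule.sub_mem _ (Submodule.mem_sup_left hrel) i2) i3
      convert this using 1
      abel
  · simp only [not_forall] at hor
    obtain ⟨⟨a, b⟩, he, hab⟩ := hor
    have hba : b < a := lt_of_le_of_ne (not_lt.1 hab) (Γ.2.1 _ he).symm
    obtain ⟨Γ₀, hΓ₀⟩ := Multiset.exists_cons_of_mem he
    have hΓ0 : ∀ e ∈ Γ₀, e.1 ≠ e.2 := fun e he => Γ.2.1 e (by rw [hΓ₀]; simp [he])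
    have hval := Γ.2.2
    rw [hΓ₀, valence_cons] at hval
    let Γ' : GraphOf n v := ⟨(b, a) ::ₘ Γ₀, by
      simp only [Multiset.mem_cons, forall_eq_or_imp]
      exact ⟨hba.ne, hΓ0⟩, by
      rw [valence_cons, ← hval]; abel⟩
    have hcost := edgeCost_flip hba
    have i2 := ih (cost Γ'.1) (by
      simp only [Γ', hΓ₀, cost_cons]; omega) Γ' rfl
    have hrel : (Finsupp.single Γ 1 + Finsupp.single Γ' 1 :
        GraphOf n v →₀ k) ∈ Submodule.span k (signRel k n v ∪ pluckerRel k n v) :=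
      Submodule.subset_span (Or.inl ⟨Γ, Γ', Γ₀, a, b, hΓ₀, rfl, rfl⟩)
    have := Submodule.sub_mem _ (Submodule.mem_sup_left hrel) i2
    convert this using 1
    abel

lemma relations_le_ker (k : Type) [Field k] (n : ℕ) (v : Fin n → ℕ) :
    Submodule.span k (signRel k n v ∪ pluckerRel k n v) ≤
      LinearMap.ker
        (Finsupp.linearCombination k (fun Γ : GraphOf n v => graphMonomial k n Γ.1)) := by
  rw [Submodule.span_le]
  rintro w (⟨Γ, Γ', Γ₀, a, b, h, h', rfl⟩ |
    ⟨Γ₁, Γ₂, Γ₃, Γ₀, a, b, c, d, -, -, -, -, -, -, h1, h2, h3, rfl⟩)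
  · simp only [SetLike.mem_coe, LinearMap.mem_ker, map_add, Finsupp.linearCombination_single,
      one_smul, h, h', graphMonomial_cons, bracket]
    ring
  · simp only [SetLike.mem_coe, LinearMap.mem_ker, map_add, map_sub,
      Finsupp.linearCombination_single, one_smul, h1, h2, h3, graphMonomial_cons, bracket]
    ring

/-- The linear relations among graph monomials are spanned by the sign relations and the
Plücker relations. -/
theorem stmt7 (k : Type) [Field k] [CharZero k] (n : ℕ) (v : Fin n → ℕ) :
    LinearMap.ker
      (Finsupp.linearCombination k (fun Γ : GraphOf n v => graphMonomial k n Γ.1)) =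
    Submodule.span k
      ({w : GraphOf n v →₀ k | ∃ (Γ Γ' : GraphOf n v) (Γ₀ : Multiset (Fin n × Fin n))
          (a b : Fin n),
          Γ.1 = (a, b) ::ₘ Γ₀ ∧ Γ'.1 = (b, a) ::ₘ Γ₀ ∧
          w = Finsupp.single Γ 1 + Finsupp.single Γ' 1} ∪
       {w : GraphOf n v →₀ k | ∃ (Γ₁ Γ₂ Γ₃ : GraphOf n v) (Γ₀ : Multiset (Fin n × Fin n))
          (a b c d : Fin n),
          a ≠ b ∧ a ≠ c ∧ a ≠ d ∧ b ≠ c ∧ b ≠ d ∧ c ≠ d ∧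
          Γ₁.1 = (a, b) ::ₘ (c, d) ::ₘ Γ₀ ∧
          Γ₂.1 = (a, c) ::ₘ (b, d) ::ₘ Γ₀ ∧
          Γ₃.1 = (a, d) ::ₘ (b, c) ::ₘ Γ₀ ∧
          w = Finsupp.single Γ₁ 1 - Finsupp.single Γ₂ 1 + Finsupp.single Γ₃ 1}) := by
  change _ = Submodule.span k (signRel k n v ∪ pluckerRel k n v)
  refine le_antisymm (fun w hw => ?_) (relations_le_ker k n v)
  have htop : w ∈ Submodule.span k (signRel k n v ∪ pluckerRel k n v) ⊔
      Finsupp.supported k k {Δ : GraphOf n v | IsStd Δ.1} := by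
    rw [← Finsupp.sum_single w]
    refine Submodule.sum_mem _ fun Γ _ => ?_
    have := Submodule.smul_mem _ (w Γ) (straighten k n v Γ)
    simpa using this
  obtain ⟨s, hs, t, ht, rfl⟩ := Submodule.mem_sup.1 htop
  have hs0 := LinearMap.mem_ker.1 (relations_le_ker k n v hs)
  rw [LinearMap.mem_ker, map_add, hs0, zero_add] at hw
  have ht0 : t = 0 := std_independent k n v t
    (fun Γ hΓ => (Finsupp.mem_supported k t).1 ht hΓ) hw
  rwa [ht0, add_zero]
end

section
/- Let k be a field of characteristic different from 2, n ≥ 2, and d ≥ 0. Suppose F ∈ A is multihomogeneous of multidegree (d, d, …, d) and is skew-invariant under the symmetric group: σ·F = sgn(σ)·F for every σ ∈ S_n acting on A by permuting the variable pairs. Then the product of brackets ∏_{1 ≤ i < j ≤ n} (x_i·y_j − x_j·y_i) divides F in A. In particular, if d < n − 1, then F = 0. -/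
/-!
Each bracket `[ij]` with `i ≠ j` is irreducible, hence prime since `A` is a UFD, and distinct
brackets (up to sign) do not divide each other. So it suffices that every `[ij]` divides `F`.

Work in the domain `A/([ij])`. There `y_i·(x_j, y_j) = y_j·(x_i, y_i)`, so scaling the `j`-th pair
by `y_i`, which multiplies `F` by `y_i^d`, gives the same value as substituting `(x_i, y_i)` for
the `j`-th pair and then scaling it by `y_j`. Substituting the `i`-th pair for the `j`-th pair
kills `F`, since `F` changes sign under the transposition `(i j)` and `2 ≠ 0`. Hence
`y_i^d·F = 0` in `A/([ij])`, and `y_i` is nonzero there.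

For the vanishing: the brackets `[1j]`, `j > 1`, all have positive degree in `x_1`, so a nonzero
multiple of the product of all brackets has degree at least `n - 1` in `x_1`, while `F` has degree
at most `d` there.
-/


open MvPolynomial

/-- The action of a permutation `σ ∈ S_n` on `A`, permuting the variable pairs:
`x_i ↦ x_{σ(i)}`, `y_i ↦ y_{σ(i)}`. -/
noncomputable def permAction (k : Type) [CommRing k] (n : ℕ) (σ : Equiv.Perm (Fin n)) :
    PtRing k n →ₐ[k] PtRing k n :=
  aeval fun p => X (σ p.1, p.2)

theorem bracket_irreducible (k : Type) [Field k] (n : ℕ) {a b : Fin n} (hab : a ≠ b) :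
    Irreducible (bracket k n a b) := by
  have h : bracket k n a b = X (a, 0) * X (b, 1) + -(X (b, 0) * X (a, 1)) := by
    rw [bracket, sub_eq_add_neg]
  rw [h]
  refine irreducible_mul_X_add _ _ _ (X_ne_zero _) ?_ ?_ ?_
  · simp [vars_X]
  · rw [vars_neg]
    intro hmem
    have := vars_mul _ _ hmem
    simp [vars_X, hab.symm] at this
  · rw [(X_prime (R := k) (i := (a, (0 : Fin 2)))).irreducible.isRelPrime_iff_not_dvd]
    intro hd
    -- the point with `x_a = 0` and all other coordinates `1`
    have := map_dvd (aeval (R := k) (fun p : Fin n × Fin 2 => if p = (a, 0) then (0 : k) else 1)) hd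
    simp [hab.symm] at this

theorem bracket_prime (k : Type) [Field k] (n : ℕ) {a b : Fin n} (hab : a ≠ b) :
    Prime (bracket k n a b) :=
  UniqueFactorizationMonoid.irreducible_iff_prime.mp (bracket_irreducible k n hab)

theorem bracket_not_dvd_bracket (k : Type) [Field k] (n : ℕ) {a b c e : Fin n}
    (hab : a < b) (hce : c < e) (hne : (a, b) ≠ (c, e)) :
    ¬ bracket k n a b ∣ bracket k n c e := by
  intro hd
  -- a point of `{c, e}` outside `{a, b}`; moving it alone separates the two brackets
  obtain ⟨m, hma, hmb, hm⟩ : ∃ m, m ≠ a ∧ m ≠ b ∧ (m = c ∨ m = e) := by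
    by_contra! hcon
    have h1 := hcon c
    have h2 := hcon e
    apply hne
    grind
  have := map_dvd (aeval (R := k) (fun p : Fin n × Fin 2 =>
    if p.2 = 0 then (if p.1 = m then (1 : k) else 0) else 1)) hd
  rcases hm with rfl | rfl
  · simp [bracket, hma.symm, hmb.symm, hce.ne'] at this
  · simp [bracket, hma.symm, hmb.symm, hce.ne] at this

theorem degree_pair_of_mem_support {k : Type} [Field k] {n d : ℕ} {F : PtRing k n}
    (hhom : F ∈ weightedHomogeneousSubmodule k
      (fun p : Fin n × Fin 2 => Finsupp.single p.1 1)
      (Finsupp.equivFunOnFinite.symm fun _ : Fin n => d))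
    {m : Fin n × Fin 2 →₀ ℕ} (hm : m ∈ F.support) (j : Fin n) :
    m (j, 0) + m (j, 1) = d := by
  have h := (mem_weightedHomogeneousSubmodule _ _ _ _).mp hhom (mem_support_iff.mp hm)
  have hval := DFunLike.congr_fun h j
  rw [Finsupp.weight_apply, Finsupp.sum_fintype _ _ (by simp)] at hval
  simpa [Finsupp.finsetSum_apply, Fintype.sum_prod_type, Finsupp.single_apply,
    Finset.sum_add_distrib] using hval

/-- Scaling the `j`-th pair of values by `s` scales the value of `F` by `s ^ d`. -/
theorem aeval_scale_pair {k : Type} [Field k] {n d : ℕ} {F : PtRing k n}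
    (hhom : F ∈ weightedHomogeneousSubmodule k
      (fun p : Fin n × Fin 2 => Finsupp.single p.1 1)
      (Finsupp.equivFunOnFinite.symm fun _ : Fin n => d))
    {B : Type} [CommRing B] [Algebra k B] (f : Fin n × Fin 2 → B) (s : B) (j : Fin n) :
    aeval (fun p => if p.1 = j then s * f p else f p) F = s ^ d * aeval f F := by
  rw [aeval_def, aeval_def, eval₂_eq', eval₂_eq', Finset.mul_sum]
  refine Finset.sum_congr rfl fun m hm => ?_
  have hs : ∏ p : Fin n × Fin 2, (if p.1 = j then s else 1) ^ m p = s ^ d := by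
    rw [← degree_pair_of_mem_support hhom hm j, Fintype.prod_prod_type,
      Finset.prod_eq_single j]
    · simp [pow_add]
    · intro i _ hij
      simp [hij]
    · simp
  have hp : ∀ p : Fin n × Fin 2, (if p.1 = j then s * f p else f p) ^ m p
      = (if p.1 = j then s else 1) ^ m p * f p ^ m p := by
    intro p
    split_ifs <;> simp [mul_pow]
  simp_rw [hp, Finset.prod_mul_distrib, hs]
  ring

theorem bracket_dvd_of_skew {k : Type} [Field k] (hchar : ringChar k ≠ 2) {n d : ℕ}
    {F : PtRing k n}
    (hhom : F ∈ weightedHomogeneousSubmodule k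
      (fun p : Fin n × Fin 2 => Finsupp.single p.1 1)
      (Finsupp.equivFunOnFinite.symm fun _ : Fin n => d))
    (hskew : ∀ σ : Equiv.Perm (Fin n),
      permAction k n σ F = (Equiv.Perm.sign σ : ℤ) • F)
    {i j : Fin n} (hij : i ≠ j) : bracket k n i j ∣ F := by
  have hprime := bracket_prime k n hij
  let I : Ideal (PtRing k n) := Ideal.span {bracket k n i j}
  have hI : I.IsPrime := (Ideal.span_singleton_prime hprime.ne_zero).mpr hprime
  let u : PtRing k n →ₐ[k] PtRing k n ⧸ I := Ideal.Quotient.mkₐ k I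
  have hu : ∀ a, u a = 0 ↔ bracket k n i j ∣ a := fun a => by
    rw [← Ideal.mem_span_singleton]
    exact Ideal.Quotient.eq_zero_iff_mem
  let f : Fin n × Fin 2 → PtRing k n ⧸ I := fun p => u (X p)
  -- the pair `j` replaced by the pair `i`
  let g : Fin n × Fin 2 → PtRing k n ⧸ I := fun p => if p.1 = j then f (i, p.2) else f p
  have hrel : f (i, 0) * f (j, 1) = f (j, 0) * f (i, 1) := by
    have := (hu _).mpr (dvd_refl (bracket k n i j))
    simpa [bracket, sub_eq_zero, f] using this
  have hfF : aeval f F = u F := by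
    have : aeval f = u := by
      ext p
      simp [f]
    rw [this]
  have hgF : aeval g F = 0 := by
    have h1 : aeval g (permAction k n (Equiv.swap i j) F) = aeval g F := by
      rw [permAction, ← AlgHom.comp_apply]
      congr 1
      ext ⟨a, b⟩
      simp only [AlgHom.comp_apply, aeval_X, g]
      rcases eq_or_ne a i with rfl | hai
      · simp [hij]
      rcases eq_or_ne a j with rfl | haj
      · simp [hij]
      · rw [Equiv.swap_apply_of_ne_of_ne hai haj]
    rw [hskew, Equiv.Perm.sign_swap hij] at h1
    have h2 : (2 : k) • aeval g F = 0 := by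
      have h3 : - aeval g F = aeval g F := by simpa using h1
      rw [two_smul]
      nth_rewrite 1 [← h3]
      simp
    exact (smul_eq_zero.mp h2).resolve_left (Ring.two_ne_zero hchar)
  have hfg : (fun p : Fin n × Fin 2 => if p.1 = j then f (i, 1) * f p else f p)
      = fun p => if p.1 = j then f (j, 1) * g p else g p := by
    funext ⟨a, b⟩
    by_cases ha : a = j
    · subst ha
      fin_cases b
      · simp only [g, if_true, Fin.zero_eta]
        linear_combination -hrel
      · simp only [g, if_true, Fin.mk_one]
        ring
    · simp [ha, g]
  have key : f (i, 1) ^ d * u F = 0 := by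
    rw [← hfF, ← aeval_scale_pair hhom f (f (i, 1)) j, hfg, aeval_scale_pair hhom, hgF, mul_zero]
  have hne : f (i, 1) ≠ 0 := by
    intro h0
    -- the point with all `x = 0` and all `y = 1`
    have := map_dvd (aeval (R := k) (fun p : Fin n × Fin 2 => if p.2 = 0 then (0 : k) else 1))
      ((hu _).mp h0)
    simp [bracket] at this
  exact (hu F).mp ((mul_eq_zero.mp key).resolve_left (pow_ne_zero d hne))

theorem one_le_degreeOf_bracket (k : Type) [Field k] (n : ℕ) {a b : Fin n} (hab : a ≠ b) :
    1 ≤ degreeOf (a, 0) (bracket k n a b) := by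
  classical
  have hm : Finsupp.single (a, (0 : Fin 2)) 1 + Finsupp.single (b, (1 : Fin 2)) 1
      ∈ (bracket k n a b).support := by
    have hne : Finsupp.single (b, (0 : Fin 2)) 1 + Finsupp.single (a, (1 : Fin 2)) 1
        ≠ Finsupp.single (a, (0 : Fin 2)) 1 + Finsupp.single (b, (1 : Fin 2)) 1 := by
      intro h
      have := DFunLike.congr_fun h (a, (0 : Fin 2))
      simp [hab.symm] at this
    rw [mem_support_iff, bracket, X, X, X, X, monomial_mul, monomial_mul, coeff_sub,
      coeff_monomial, coeff_monomial, if_pos rfl, if_neg hne]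
    simp
  simpa using monomial_le_degreeOf (a, (0 : Fin 2)) hm

/-- A skew-invariant multihomogeneous polynomial of multidegree `(d,…,d)` is divisible by
the product of all brackets `[ij]`, `i < j`; in particular it vanishes when `d < n − 1`. -/
theorem stmt8 (k : Type) [Field k] (hchar : ringChar k ≠ 2) (n : ℕ) (hn : 2 ≤ n)
    (d : ℕ) (F : PtRing k n)
    (hhom : F ∈ weightedHomogeneousSubmodule k
      (fun p : Fin n × Fin 2 => Finsupp.single p.1 1)
      (Finsupp.equivFunOnFinite.symm fun _ : Fin n => d))
    (hskew : ∀ σ : Equiv.Perm (Fin n),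
      permAction k n σ F = (Equiv.Perm.sign σ : ℤ) • F) :
    (∏ e ∈ Finset.univ.filter (fun e : Fin n × Fin n => e.1 < e.2),
        bracket k n e.1 e.2) ∣ F ∧
    (d < n - 1 → F = 0) := by
  have hdvd : (∏ e ∈ Finset.univ.filter (fun e : Fin n × Fin n => e.1 < e.2),
      bracket k n e.1 e.2) ∣ F := by
    refine Finset.prod_dvd_of_isRelPrime ?_ ?_
    · intro e he e' he' hee
      simp only [Finset.coe_filter, Finset.mem_univ, true_and, Set.mem_ofPred_eq] at he he'
      exact (bracket_irreducible k n he.ne).isRelPrime_iff_not_dvd.mpr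
        (bracket_not_dvd_bracket k n he he' hee)
    · intro e he
      exact bracket_dvd_of_skew hchar hhom hskew (Finset.mem_filter.mp he).2.ne
  refine ⟨hdvd, fun hd => ?_⟩
  by_contra hF
  have hbne : ∀ e ∈ Finset.univ.filter (fun e : Fin n × Fin n => e.1 < e.2),
      bracket k n e.1 e.2 ≠ 0 :=
    fun e he => (bracket_irreducible k n (Finset.mem_filter.mp he).2.ne).ne_zero
  obtain ⟨H, rfl⟩ := hdvd
  let z : Fin n := ⟨0, by omega⟩
  have hle : degreeOf (z, 0) ((∏ e ∈ Finset.univ.filter (fun e : Fin n × Fin n => e.1 < e.2),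
      bracket k n e.1 e.2) * H) ≤ d := by
    rw [degreeOf_eq_sup]
    refine Finset.sup_le fun m hm => ?_
    have := degree_pair_of_mem_support hhom hm z
    omega
  rw [degreeOf_mul_eq (left_ne_zero_of_mul hF) (right_ne_zero_of_mul hF),
    degreeOf_prod_eq _ _ hbne] at hle
  have hsub : (Finset.univ.erase z).image (fun j => (z, j))
      ⊆ Finset.univ.filter (fun e : Fin n × Fin n => e.1 < e.2) := by
    intro e he
    obtain ⟨j, hj, rfl⟩ := Finset.mem_image.mp he
    have hjz : (j : ℕ) ≠ 0 := fun h => (Finset.mem_erase.mp hj).1 (Fin.ext h)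
    exact Finset.mem_filter.mpr ⟨Finset.mem_univ _, Fin.lt_def.mpr (Nat.pos_of_ne_zero hjz)⟩
  have hge := Finset.sum_le_sum_of_subset (f := fun e : Fin n × Fin n =>
    degreeOf (z, 0) (bracket k n e.1 e.2)) hsub
  rw [Finset.sum_image (by intro a _ b _ h; exact (Prod.mk.inj h).2)] at hge
  have hcard : n - 1 ≤ ∑ j ∈ Finset.univ.erase z, degreeOf (z, 0) (bracket k n z j) := by
    calc n - 1 = ∑ _j ∈ Finset.univ.erase z, 1 := by simp
      _ ≤ _ := Finset.sum_le_sum fun j hj =>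
        one_le_degreeOf_bracket k n (Finset.mem_erase.mp hj).1.symm
  simp only at hge
  omega
end
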